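/- Let δ ≥ e be a real number. Then for every z ∈ (0, 1], δ·e^z + e·z·ln z − e·z² − e·(δ−1)·z ≥ 0. -/

import Mathlib

/-!
The expression is affine in `δ` with slope `exp z - e * z ≥ 0`, so the case `δ = 1` suffices.
There, after division by `e * z`, it is the tangent line bound `1 + w ≤ exp w` at
`w = z - 1 - log z`, because `exp w = exp (z - 1) / z`.
-/

theorem mul_sub_log_le_exp_sub_one {z : ℝ} (hz : 0 < z) :
    z * (z - Real.log z) ≤ Real.exp (z - 1) :=
  calc
    z * (z - Real.log z) = z * ((z - 1 - Real.log z) + 1) := by ring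
    _ ≤ z * Real.exp (z - 1 - Real.log z) := by gcongr; exact Real.add_one_le_exp _
    _ = Real.exp (z - 1) := by rw [Real.exp_sub, Real.exp_log hz, mul_div_cancel₀ _ hz.ne']

theorem rand_rob5_substituted_general {δ z : ℝ} (hδ : 1 ≤ δ) (hz : 0 < z) :
    δ * Real.exp z + Real.exp 1 * z * Real.log z - Real.exp 1 * z ^ 2
      - Real.exp 1 * (δ - 1) * z ≥ 0 := by
  have slope_nonneg : 0 ≤ (δ - 1) * (Real.exp z - Real.exp 1 * z) :=
    mul_nonneg (sub_nonneg.2 hδ) (sub_nonneg.2 Real.exp_one_mul_le_exp)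
  have at_one : Real.exp 1 * (z * (z - Real.log z)) ≤ Real.exp z :=
    calc
      Real.exp 1 * (z * (z - Real.log z)) ≤ Real.exp 1 * Real.exp (z - 1) := by
        gcongr; exact mul_sub_log_le_exp_sub_one hz
      _ = Real.exp z := by rw [← Real.exp_add, add_sub_cancel]
  linarith

theorem rand_rob5_substituted (δ : ℝ) (hδ : Real.exp 1 ≤ δ) :
    ∀ z ∈ Set.Ioc (0 : ℝ) 1,
      δ * Real.exp z + Real.exp 1 * z * Real.log z - Real.exp 1 * z ^ 2
        - Real.exp 1 * (δ - 1) * z ≥ 0 :=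
  fun _ hz => rand_rob5_substituted_general ((Real.one_le_exp zero_le_one).trans hδ) hz.1
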